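/- arXiv:1503.07372 — 9 statements merged into one kernel-verified Lean document; each statement's English description precedes it below -/
import Mathlib

section
/- For all nonnegative real numbers S, I, C with C ≥ I, one has log₂(1 + C + I + S/(1+I)) + log₂(1 + I + S(1+C)/(1+C+I)) ≥ log₂(1 + S/(1+I)) + log₂(1 + (√S + √I)²) − 2. -/
theorem stmt_6 (S I C : ℝ) (hS : 0 ≤ S) (hI : 0 ≤ I) (hC : 0 ≤ C) (hCI : C ≥ I) :
    Real.logb 2 (1 + C + I + S / (1 + I)) + Real.logb 2 (1 + I + S * (1 + C) / (1 + C + I))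
      ≥ Real.logb 2 (1 + S / (1 + I)) + Real.logb 2 (1 + (Real.sqrt S + Real.sqrt I) ^ 2) - 2 := by
  have hfirst : Real.logb 2 (1 + S / (1 + I)) ≤ Real.logb 2 (1 + C + I + S / (1 + I)) :=
    Real.logb_le_logb_of_le one_lt_two (by positivity) (by linarith)
  have hhalf : S / 2 ≤ S * (1 + C) / (1 + C + I) := by
    rw [div_le_div_iff₀ two_pos (by positivity)]
    nlinarith [mul_nonneg hS (sub_nonneg.2 hCI)]
  have hsq : (Real.sqrt S + Real.sqrt I) ^ 2 ≤ 2 * S + 2 * I := by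
    nlinarith [Real.sq_sqrt hS, Real.sq_sqrt hI, sq_nonneg (Real.sqrt S - Real.sqrt I)]
  have hsecond : Real.logb 2 (1 + (Real.sqrt S + Real.sqrt I) ^ 2)
      ≤ Real.logb 2 (2 ^ 2 * (1 + I + S * (1 + C) / (1 + C + I))) :=
    Real.logb_le_logb_of_le one_lt_two (by positivity) (by linarith)
  have hlog : Real.logb 2 ((2 : ℝ) ^ 2) = 2 := by
    rw [Real.logb_pow, Real.logb_self_eq_one one_lt_two]
    norm_num
  rw [Real.logb_mul (by positivity) (by positivity), hlog] at hsecond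
  linarith
end

section
/- For all nonnegative real numbers S, I, C with C ≥ I, one has log₂(1 + C/(1+I+S)) + log₂(1 + I + S(1+C)/(1+I+C)) ≥ log₂(1 + I + S/2). -/
theorem stmt_7 (S I C : ℝ) (hS : 0 ≤ S) (hI : 0 ≤ I) (hC : 0 ≤ C) (hCI : C ≥ I) :
    Real.logb 2 (1 + C / (1 + I + S)) + Real.logb 2 (1 + I + S * (1 + C) / (1 + I + C))
      ≥ Real.logb 2 (1 + I + S / 2) := by
  have hfirst : 0 ≤ Real.logb 2 (1 + C / (1 + I + S)) :=
    Real.logb_nonneg one_lt_two (le_add_of_nonneg_right (by positivity))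
  have hhalf : S / 2 ≤ S * (1 + C) / (1 + I + C) := by
    rw [div_le_div_iff₀ two_pos (by positivity), mul_assoc]
    exact mul_le_mul_of_nonneg_left (by linarith) hS
  have hsecond : Real.logb 2 (1 + I + S / 2)
      ≤ Real.logb 2 (1 + I + S * (1 + C) / (1 + I + C)) :=
    Real.logb_le_logb_of_le one_lt_two (by positivity) (by linarith)
  linarith
end

section
/- For all nonnegative real numbers S, I, C with I ≤ S and C ≤ I(1+I)/(1+S), one has log₂(1 + C + I + S/(1+I)) + log₂(1 + I + S(1+C)/(1+C+I)) ≤ 2·log₂(1 + I + S/(1+I)) + 2. -/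
theorem stmt_8 (S I C : ℝ) (hS : 0 ≤ S) (hI : 0 ≤ I) (hC : 0 ≤ C)
    (hIS : I ≤ S) (hCb : C ≤ I * (1 + I) / (1 + S)) :
    Real.logb 2 (1 + C + I + S / (1 + I)) + Real.logb 2 (1 + I + S * (1 + C) / (1 + C + I))
      ≤ 2 * Real.logb 2 (1 + I + S / (1 + I)) + 2 := by
  have hCS : C * (1 + S) ≤ I * (1 + I) := (le_div_iff₀ (by positivity)).1 hCb
  have hCI : C ≤ I := by
    refine hCb.trans ((div_le_iff₀ (by positivity)).2 ?_)
    gcongr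
  have hdiv : 0 ≤ S / (1 + I) := by positivity
  have hfrac : S * (1 + C) / (1 + C + I) ≤ S / (1 + I) + I := by
    have hone : S / (1 + C + I) ≤ S / (1 + I) := by
      gcongr
      linarith
    have hcoop : S * C / (1 + C + I) ≤ I := by
      rw [div_le_iff₀ (by positivity)]
      nlinarith [mul_nonneg hI hC]
    calc S * (1 + C) / (1 + C + I) = S / (1 + C + I) + S * C / (1 + C + I) := by ring
      _ ≤ S / (1 + I) + I := add_le_add hone hcoop
  have hdouble : Real.logb 2 (2 * (1 + I + S / (1 + I)))
      = 1 + Real.logb 2 (1 + I + S / (1 + I)) := by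
    rw [Real.logb_mul two_ne_zero (by positivity), Real.logb_self_eq_one one_lt_two]
  have hfirst : Real.logb 2 (1 + C + I + S / (1 + I))
      ≤ Real.logb 2 (2 * (1 + I + S / (1 + I))) :=
    Real.logb_le_logb_of_le one_lt_two (by positivity) (by linarith)
  have hsecond : Real.logb 2 (1 + I + S * (1 + C) / (1 + C + I))
      ≤ Real.logb 2 (2 * (1 + I + S / (1 + I))) :=
    Real.logb_le_logb_of_le one_lt_two (by positivity) (by linarith)
  linarith
end

section
/- For all nonnegative real numbers S, I, C with I ≤ S and C ≤ I(1+I)/(1+S), one has log₂(1 + C/(1+I+S)) + log₂(1 + I + S(1+C)/(1+I+C)) ≤ log₂(1 + I + S/(1+I)) + 2. -/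
theorem stmt_9 (S I C : ℝ) (hS : 0 ≤ S) (hI : 0 ≤ I) (hC : 0 ≤ C)
    (hIS : I ≤ S) (hCb : C ≤ I * (1 + I) / (1 + S)) :
    Real.logb 2 (1 + C / (1 + I + S)) + Real.logb 2 (1 + I + S * (1 + C) / (1 + I + C))
      ≤ Real.logb 2 (1 + I + S / (1 + I)) + 2 := by
  have hCS : C * (1 + S) ≤ I * (1 + I) := (le_div_iff₀ (by positivity)).1 hCb
  have hCI : C ≤ I := hCb.trans <| (div_le_iff₀ (by positivity)).2 <| by gcongr
  have h_first : 1 + C / (1 + I + S) ≤ 2 := by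
    have : C / (1 + I + S) ≤ 1 := (div_le_one (by positivity)).2 (by linarith)
    linarith
  have h_second : 1 + I + S * (1 + C) / (1 + I + C) ≤ 2 * (1 + I + S / (1 + I)) := by
    have h_drop : S * (1 + C) / (1 + I + C) ≤ S * (1 + C) / (1 + I) :=
      div_le_div_of_nonneg_left (by positivity) (by positivity) (by linarith)
    have h_split : S * (1 + C) / (1 + I) = S / (1 + I) + S * C / (1 + I) := by ring
    have h_cross : S * C / (1 + I) ≤ I :=
      (div_le_iff₀ (by positivity)).2 (by linarith)
    have : 0 ≤ S / (1 + I) := by positivity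
    linarith
  have h_four : (2 : ℝ) = Real.logb 2 4 := by
    rw [eq_comm, Real.logb_eq_iff_rpow_eq] <;> norm_num
  calc
    _ = Real.logb 2 ((1 + C / (1 + I + S)) * (1 + I + S * (1 + C) / (1 + I + C))) :=
      (Real.logb_mul (by positivity) (by positivity)).symm
    _ ≤ Real.logb 2 ((1 + I + S / (1 + I)) * 4) := by
      refine Real.logb_le_logb_of_le (by norm_num) (by positivity) ?_
      calc
        _ ≤ 2 * (2 * (1 + I + S / (1 + I))) := by gcongr
        _ = _ := by ring
    _ = _ := by rw [Real.logb_mul (by positivity) (by norm_num), ← h_four]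
end

section
/- For all nonnegative real numbers S, I, C with I ≤ S and I(1+I)/(1+S) ≤ C ≤ max{I, S/(1+I)}, one has log₂(1 + I + S(1+C)/(1+I+C)) ≤ log₂(1 + S/(1+I)) + log₂(1 + min{I, C}) + 2. -/
theorem stmt_11 (S I C : ℝ) (hS : 0 ≤ S) (hI : 0 ≤ I) (hC : 0 ≤ C)
    (hIS : I ≤ S) (hClo : I * (1 + I) / (1 + S) ≤ C) (hChi : C ≤ max I (S / (1 + I))) :
    Real.logb 2 (1 + I + S * (1 + C) / (1 + I + C))
      ≤ Real.logb 2 (1 + S / (1 + I)) + Real.logb 2 (1 + min I C) + 2 := by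
  have hI1 : 0 < 1 + I := by linarith
  have hA : 0 < 1 + S / (1 + I) := by positivity
  have hB : 0 < 1 + min I C := by positivity
  have hAB : 0 < (1 + S / (1 + I)) * (1 + min I C) := mul_pos hA hB
  have hnum : 1 + I ≤ (1 + S / (1 + I)) * (1 + min I C) := by
    rcases le_total C I with h | h
    · rw [min_eq_right h]
      rw [div_le_iff₀ (by linarith)] at hClo
      have heq : (1 + S / (1 + I)) * (1 + C) = (1 + I + S) * (1 + C) / (1 + I) := by
        field_simp
      rw [heq, le_div_iff₀ hI1]
      nlinarith [mul_nonneg hC hI]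
    · rw [min_eq_left h]
      have : 0 ≤ S / (1 + I) := by positivity
      nlinarith
  have hfrac : S * (1 + C) / (1 + I + C) ≤ (1 + S / (1 + I)) * (1 + min I C) := by
    rcases le_total C I with h | h
    · rw [min_eq_right h]
      calc S * (1 + C) / (1 + I + C) ≤ S * (1 + C) / (1 + I) :=
            div_le_div_of_nonneg_left (by positivity) hI1 (by linarith)
        _ = S / (1 + I) * (1 + C) := by ring
        _ ≤ (1 + S / (1 + I)) * (1 + C) := by
            gcongr
            linarith
    · rw [min_eq_left h]
      have heq : (1 + S / (1 + I)) * (1 + I) = 1 + I + S := by field_simp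
      rw [heq, div_le_iff₀ (by linarith)]
      nlinarith [mul_nonneg hS hI, mul_nonneg hI hC]
  have htwo : (2 : ℝ) = Real.logb 2 4 := by
    rw [show (4 : ℝ) = 2 ^ (2 : ℝ) by norm_num, Real.logb_rpow] <;> norm_num
  calc Real.logb 2 (1 + I + S * (1 + C) / (1 + I + C))
      ≤ Real.logb 2 ((1 + S / (1 + I)) * (1 + min I C) * 4) :=
        Real.logb_le_logb_of_le (by norm_num) (by positivity) (by linarith)
    _ = Real.logb 2 (1 + S / (1 + I)) + Real.logb 2 (1 + min I C) + 2 := by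
        rw [Real.logb_mul hAB.ne' (by norm_num), Real.logb_mul hA.ne' hB.ne', ← htwo]
end

section
/- For all nonnegative real numbers S, I, C with I ≤ S and I(1+I)/(1+S) ≤ C ≤ max{I, S/(1+I)}, one has log₂(1 + S + I) + log₂(1 + I + S(1+C)/(1+C+I)) ≤ log₂(1 + S/(1+I)) + log₂(1 + I + S/(1 + min{I,C})) + 2·log₂(1 + min{I,C}) + 3. -/
/-- The inequality between the arguments of the logarithms, after cancelling `1 + S + I`. -/
lemma one_add_mul_le_eight_mul (S I C : ℝ) (hS : 0 ≤ S) (hI : 0 ≤ I) (hC : 0 ≤ C)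
    (hClo : I * (1 + I) / (1 + S) ≤ C) :
    (1 + I) * (1 + I + S * (1 + C) / (1 + C + I))
      ≤ 8 * ((1 + min I C) * ((1 + I) * (1 + min I C) + S)) := by
  rcases le_total I C with h | h
  · rw [min_eq_left h]
    have h1 : S * (1 + C) / (1 + C + I) ≤ S := by
      rw [div_le_iff₀ (by positivity)]
      nlinarith [mul_nonneg hS hI]
    have h2 : 1 + I + S * (1 + C) / (1 + C + I) ≤ 8 * ((1 + I) * (1 + I) + S) := by
      nlinarith [mul_nonneg hI hI]
    calc _ ≤ (1 + I) * (8 * ((1 + I) * (1 + I) + S)) := by gcongr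
      _ = _ := by ring
  · rw [min_eq_right h]
    rw [div_le_iff₀ (by positivity)] at hClo
    have h1 : (1 + I) * (S * (1 + C) / (1 + C + I)) ≤ S * (1 + C) := by
      rw [mul_div_assoc', div_le_iff₀ (by positivity)]
      nlinarith [mul_nonneg (mul_nonneg hS hC) (add_nonneg zero_le_one hC)]
    have h2 : (1 + I) * (1 + I) ≤ (1 + C) * ((1 + I) * (1 + C) + S) := by
      nlinarith [mul_nonneg hI hC, mul_nonneg hI (mul_nonneg hC hC), mul_nonneg hC hC]
    have h3 : 0 ≤ (1 + C) * ((1 + I) * (1 + C)) := by positivity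
    have h4 : 0 ≤ (1 + C) * S := by positivity
    linarith

theorem stmt_12 (S I C : ℝ) (hS : 0 ≤ S) (hI : 0 ≤ I) (hC : 0 ≤ C)
    (hIS : I ≤ S) (hClo : I * (1 + I) / (1 + S) ≤ C) (hChi : C ≤ max I (S / (1 + I))) :
    Real.logb 2 (1 + S + I) + Real.logb 2 (1 + I + S * (1 + C) / (1 + C + I))
      ≤ Real.logb 2 (1 + S / (1 + I)) + Real.logb 2 (1 + I + S / (1 + min I C))
        + 2 * Real.logb 2 (1 + min I C) + 3 := by
  have key := one_add_mul_le_eight_mul S I C hS hI hC hClo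
  have hm : 0 ≤ min I C := le_min hI hC
  generalize min I C = m at *
  have h8 : (3 : ℝ) = Real.logb 2 (2 ^ 3) := by
    rw [Real.logb_pow, Real.logb_self_eq_one (by norm_num)]
    norm_num
  have h2 : 2 * Real.logb 2 (1 + m) = Real.logb 2 ((1 + m) ^ 2) := by
    rw [Real.logb_pow]
    norm_num
  rw [h8, h2, ← Real.logb_mul (by positivity) (by positivity),
    ← Real.logb_mul (by positivity) (by positivity),
    ← Real.logb_mul (by positivity) (by positivity),
    ← Real.logb_mul (by positivity) (by positivity)]
  apply Real.logb_le_logb_of_le (by norm_num) (by positivity)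
  have e : (1 + S / (1 + I)) * (1 + I + S / (1 + m)) * (1 + m) ^ 2 * 2 ^ 3
      = (1 + S + I) * (8 * ((1 + m) * ((1 + I) * (1 + m) + S)) / (1 + I)) := by
    field_simp
    ring
  rw [e]
  gcongr
  rw [le_div_iff₀ (by positivity)]
  linarith
end

section
/- For all nonnegative real numbers S, I, C with C ≥ S/(1+I), one has log₂(1 + S/(1+I)) ≤ log₂(1 + C/(1+I)) + log₂(1 + S/(1+C)) + 1; equivalently, 1 + S/(1+I) ≤ 2(1 + C/(1+I))(1 + S/(1+C)). -/
/-- The comparison of gains holds without the factor `2` and for every cooperation gain. -/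
theorem one_add_div_le_mul_one_add_div {S I C : ℝ} (hS : 0 ≤ S) (hI : 0 ≤ I) (hC : 0 ≤ C) :
    1 + S / (1 + I) ≤ (1 + C / (1 + I)) * (1 + S / (1 + C)) := by
  have h : (1 + C / (1 + I)) * (1 + S / (1 + C)) - (1 + S / (1 + I))
      = (C * (1 + C) + I * S) / ((1 + I) * (1 + C)) := by
    field_simp
    ring
  have h' : 0 ≤ (C * (1 + C) + I * S) / ((1 + I) * (1 + C)) := by positivity
  linarith

theorem stmt_15 (S I C : ℝ) (hS : 0 ≤ S) (hI : 0 ≤ I) (hC : 0 ≤ C)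
    (hCb : C ≥ S / (1 + I)) :
    (Real.logb 2 (1 + S / (1 + I))
      ≤ Real.logb 2 (1 + C / (1 + I)) + Real.logb 2 (1 + S / (1 + C)) + 1) ∧
    1 + S / (1 + I) ≤ 2 * ((1 + C / (1 + I)) * (1 + S / (1 + C))) := by
  have key := one_add_div_le_mul_one_add_div hS hI hC
  have hIC : 0 < 1 + C / (1 + I) := by positivity
  have hSC : 0 < 1 + S / (1 + C) := by positivity
  have hSI : 0 < 1 + S / (1 + I) := by positivity
  refine ⟨?_, by linarith⟩
  rw [← Real.logb_mul hIC.ne' hSC.ne']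
  have := Real.logb_le_logb_of_le one_lt_two hSI key
  linarith
end

section
/- For all nonnegative real numbers S, I, C with C ≥ max{S, I}, one has log₂(1 + C/(1+I+S)) + log₂(1 + I + S(1+C)/(1+I+C)) + 1 ≥ log₂(1 + (√S + √I)²). -/
/-- Under strong cooperation the product of the two gain factors dominates `1 + I + S`. -/
lemma one_add_add_le_mul_of_le {S I C : ℝ} (hS : 0 ≤ S) (hI : 0 ≤ I) (hSC : S ≤ C)
    (hIC : I ≤ C) :
    1 + I + S ≤ (1 + C / (1 + I + S)) * (1 + I + S * (1 + C) / (1 + I + C)) := by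
  have hC : 0 ≤ C := hS.trans hSC
  have hD : 0 < 1 + I + S := by positivity
  have hE : 0 < 1 + I + C := by positivity
  have h_eq : (1 + C / (1 + I + S)) * (1 + I + S * (1 + C) / (1 + I + C)) - (1 + I + S)
      = (C * (1 + I + S) * (1 + I + C) - S * I * (1 + I + S + C))
        / ((1 + I + S) * (1 + I + C)) := by
    field_simp
    ring
  have h_left : S * (I * (1 + I + S)) ≤ C * (I * (1 + I + S)) :=
    mul_le_mul_of_nonneg_right hSC (by positivity)
  have h_right : I * S ≤ C * (1 + I + S) :=
    mul_le_mul hIC (by linarith) hS hC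
  have h_right' : C * (I * S) ≤ C * (C * (1 + I + S)) :=
    mul_le_mul_of_nonneg_left h_right hC
  have h_one : 0 ≤ C * (1 + I + S) := by positivity
  have h_num : 0 ≤ C * (1 + I + S) * (1 + I + C) - S * I * (1 + I + S + C) := by
    linarith
  have h_nonneg := div_nonneg h_num (mul_pos hD hE).le
  linarith

theorem stmt_17 (S I C : ℝ) (hS : 0 ≤ S) (hI : 0 ≤ I) (hC : 0 ≤ C)
    (hCb : C ≥ max S I) :
    Real.logb 2 (1 + C / (1 + I + S)) + Real.logb 2 (1 + I + S * (1 + C) / (1 + I + C)) + 1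
      ≥ Real.logb 2 (1 + (Real.sqrt S + Real.sqrt I) ^ 2) := by
  have hA : 0 < 1 + C / (1 + I + S) := by positivity
  have hB : 0 < 1 + I + S * (1 + C) / (1 + I + C) := by positivity
  have h_sum : Real.logb 2 (1 + C / (1 + I + S))
      + Real.logb 2 (1 + I + S * (1 + C) / (1 + I + C)) + 1
      = Real.logb 2 ((1 + C / (1 + I + S)) * (1 + I + S * (1 + C) / (1 + I + C)) * 2) := by
    rw [Real.logb_mul (mul_pos hA hB).ne' two_ne_zero, Real.logb_mul hA.ne' hB.ne',
      Real.logb_self_eq_one one_lt_two]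
  rw [ge_iff_le, h_sum]
  refine Real.logb_le_logb_of_le one_lt_two (by positivity) ?_
  have h_prod := one_add_add_le_mul_of_le hS hI ((le_max_left S I).trans hCb)
    ((le_max_right S I).trans hCb)
  nlinarith [sq_nonneg (Real.sqrt S - Real.sqrt I), Real.sq_sqrt hS, Real.sq_sqrt hI]
end

section
/- For all nonnegative real numbers S and I, one has log₂(1 + S(1+I)/(1+2I)) ≥ log₂(1 + S) − 1; equivalently, 2(1 + S(1+I)/(1+2I)) ≥ 1 + S. -/
theorem stmt_19 (S I : ℝ) (hS : 0 ≤ S) (hI : 0 ≤ I) :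
    Real.logb 2 (1 + S * (1 + I) / (1 + 2 * I)) ≥ Real.logb 2 (1 + S) - 1 ∧
    2 * (1 + S * (1 + I) / (1 + 2 * I)) ≥ 1 + S := by
  have half_le : S / 2 ≤ S * (1 + I) / (1 + 2 * I) := by
    rw [div_le_div_iff₀ (by positivity) (by positivity)]
    nlinarith
  have gap : 1 + S ≤ 2 * (1 + S * (1 + I) / (1 + 2 * I)) := by linarith
  have rate_pos : 0 < 1 + S * (1 + I) / (1 + 2 * I) := by positivity
  refine ⟨?_, gap⟩
  have log_gap := Real.logb_le_logb_of_le one_lt_two (by positivity) gap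
  rw [Real.logb_mul two_ne_zero rate_pos.ne', Real.logb_self_eq_one one_lt_two] at log_gap
  linarith
end
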